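/- arXiv:1501.04817 — 2 statements merged into one kernel-verified Lean document; each statement's English description precedes it below -/
import Mathlib

section
/- Let Φ ∈ ℝ^{m×n} have restricted isometry constant δ := δ_{2K} ∈ (0,1) of order 2K, let x ∈ ℝ^n be K-sparse with support T, |T| = K ≥ 1, set κ := max_{i,j∈T} |x_i|/|x_j| and τ := δ^{1/2}, and let y = Φx + v with v ≠ 0 and SNR ≥ κ²·δ^{−3/2}. Then for every run of OMP and every integer k with 0 ≤ k ≤ K − ⌈τK⌉, the residual satisfies ‖Φᵀ r^k‖_∞² ≥ (1 − 6τ)·(x_τ^k)². -/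
noncomputable section
open Finset

/-- `Vec n` is `ℝ^n` with the Euclidean (ℓ²) norm. -/
abbrev Vec (n : ℕ) := EuclideanSpace ℝ (Fin n)

/-- The standard inner product `⟨u, v⟩ = ∑ i, u i * v i`. -/
def dot {n : ℕ} (u v : Vec n) : ℝ := ∑ i, u i * v i

/-- The `j`-th column of a matrix, as a Euclidean vector. -/
def col {m n : ℕ} (Φ : Matrix (Fin m) (Fin n) ℝ) (j : Fin n) : Vec m :=
  WithLp.toLp 2 fun i => Φ i j

/-- Matrix-vector multiplication `Φ x`, valued in Euclidean space. -/
def mulVec' {m n : ℕ} (Φ : Matrix (Fin m) (Fin n) ℝ) (x : Vec n) : Vec m :=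
  WithLp.toLp 2 fun i => ∑ j, Φ i j * x j

/-- The support of a vector, as a `Finset`. -/
def suppF {n : ℕ} (x : Vec n) : Finset (Fin n) :=
  Finset.univ.filter fun i => x i ≠ 0

/-- Restriction of a vector to an index set (zero outside the set). -/
def restrict {n : ℕ} (x : Vec n) (S : Finset (Fin n)) : Vec n :=
  WithLp.toLp 2 fun i => if i ∈ S then x i else 0

/-- `RIPConst Φ L δ` : δ is the restricted isometry constant of `Φ` of order `L`,
i.e. the smallest `c ≥ 0` such that `(1-c)‖u‖² ≤ ‖Φu‖² ≤ (1+c)‖u‖²` for all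
`L`-sparse `u`. -/
def RIPConst {m n : ℕ} (Φ : Matrix (Fin m) (Fin n) ℝ) (L : ℕ) (δ : ℝ) : Prop :=
  IsLeast {c : ℝ | 0 ≤ c ∧ ∀ u : Vec n, (suppF u).card ≤ L →
    (1 - c) * ‖u‖ ^ 2 ≤ ‖mulVec' Φ u‖ ^ 2 ∧ ‖mulVec' Φ u‖ ^ 2 ≤ (1 + c) * ‖u‖ ^ 2} δ

/-- Signal-to-noise ratio `‖Φx‖²/‖v‖²`. -/
def SNR {m n : ℕ} (Φ : Matrix (Fin m) (Fin n) ℝ) (x : Vec n) (v : Vec m) : ℝ :=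
  ‖mulVec' Φ x‖ ^ 2 / ‖v‖ ^ 2

/-- A run of `N` iterations of Orthogonal Matching Pursuit on data `(Φ, y)`:
`idx (k+1) = t^{k+1}` is the index selected at iteration `k+1`, `sets k = T^k`,
`est k = x^k` and `res k = r^k`. -/
structure OMPRun {m n : ℕ} (Φ : Matrix (Fin m) (Fin n) ℝ) (y : Vec m) (N : ℕ) where
  idx : ℕ → Fin n
  sets : ℕ → Finset (Fin n)
  est : ℕ → Vec n
  res : ℕ → Vec m
  sets_zero : sets 0 = ∅
  est_zero : est 0 = 0
  res_zero : res 0 = y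
  idx_not_mem : ∀ k < N, idx (k + 1) ∉ sets k
  idx_max : ∀ k < N, ∀ i : Fin n, i ∉ sets k →
    |dot (col Φ i) (res k)| ≤ |dot (col Φ (idx (k + 1))) (res k)|
  sets_succ : ∀ k < N, sets (k + 1) = insert (idx (k + 1)) (sets k)
  est_supp : ∀ k < N, suppF (est (k + 1)) ⊆ sets (k + 1)
  est_min : ∀ k < N, ∀ u : Vec n, suppF u ⊆ sets (k + 1) →
    ‖y - mulVec' Φ (est (k + 1))‖ ≤ ‖y - mulVec' Φ u‖
  res_succ : ∀ k < N, res (k + 1) = y - mulVec' Φ (est (k + 1))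

/-- The vector `Φᵀ w` restricted to an index set `A` (the vector of correlations
`⟨φ_i, w⟩` for `i ∈ A`, zero outside `A`), as a Euclidean vector. -/
def colDots {m n : ℕ} (Φ : Matrix (Fin m) (Fin n) ℝ) (A : Finset (Fin n)) (w : Vec m) : Vec n :=
  WithLp.toLp 2 fun i => if i ∈ A then dot (col Φ i) w else 0

/-- The vector `Φᵀ w` of all column correlations, as a plain function (so `‖·‖`
is the sup/ℓ∞ norm). -/
def dualVec {m n : ℕ} (Φ : Matrix (Fin m) (Fin n) ℝ) (w : Vec m) : Fin n → ℝ :=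
  fun i => dot (col Φ i) w

/-- `P⊥_S w` : the projection of `w` onto the orthogonal complement of the span
of the columns of `Φ` indexed by `S`. -/
def perpProj {m n : ℕ} (Φ : Matrix (Fin m) (Fin n) ℝ) (S : Finset (Fin n)) (w : Vec m) : Vec m :=
  w - (Submodule.orthogonalProjectionOnto (Submodule.span ℝ (col Φ '' (S : Set (Fin n)))) w : Vec m)

/-- The `j`-th largest value (1-indexed) among `{|x i| : i ∈ Γ}` (with
multiplicities); `0` if `j > |Γ|` or `j = 0`. -/
def kthLargest {n : ℕ} (x : Vec n) (Γ : Finset (Fin n)) (j : ℕ) : ℝ :=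
  if 1 ≤ j ∧ j ≤ Γ.card then
    (Multiset.sort (Γ.val.map fun i => |x i|) (· ≤ ·)).getD (Γ.card - j) 0
  else 0

/-!
Let `z` be a least-squares estimate supported on `S`, let `r = Φ (x - z) + v` be its residual, and
let `A` carry the largest entries of `x` on `Γ = supp x \ S`. As `z` vanishes on `A`, the
restriction `x_A` satisfies `⟨x_A, x - z⟩ = ‖x_A‖²`, and the restricted isometry property
transfers this to `⟨Φ x_A, Φ (x - z)⟩` up to `τ² ‖x_A‖ ‖x - z‖`. Comparing `z` with the
restriction of `x` to `S` gives `‖Φ (x - z)‖ ≤ ‖Φ x_Γ‖ + 2 ‖v‖`. Both terms are controlled by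
`‖x_A‖`: the first because the top `#A` of `#Γ` entries carry at least a fraction `#A / #Γ ≥ τ` of
the energy, the second by the bound on the noise. Hence `τ ‖x - z‖ = O(‖x_A‖)` and
`‖v‖ = O(τ ‖x_A‖)`, so `⟨Φ x_A, r⟩ ≥ (1 - 3 τ) ‖x_A‖²`. On the other hand
`⟨Φ x_A, r⟩ = ⟨x_A, Φᵀ r⟩ ≤ √#A ‖x_A‖ ‖Φᵀ r‖_∞`, and `‖x_A‖²` is at least `#A` times the square of
its smallest entry. For `τ > 1/6` the claimed lower bound is not positive.
-/

section Support

variable {n : ℕ} {u z x : Vec n} {S A Γ : Finset (Fin n)} {c : ℝ}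

theorem mem_suppF {i : Fin n} : i ∈ suppF u ↔ u i ≠ 0 := by
  simp [suppF]

theorem suppF_subset_iff : suppF u ⊆ S ↔ ∀ i ∉ S, u i = 0 := by
  simp only [subset_iff, mem_suppF, not_imp_comm]

theorem suppF_add_subset : suppF (u + z) ⊆ suppF u ∪ suppF z := by
  refine suppF_subset_iff.2 fun i hi => ?_
  simp only [mem_union, mem_suppF, not_or, not_not] at hi
  simp [hi]

theorem suppF_smul_subset : suppF (c • u) ⊆ suppF u := by
  refine suppF_subset_iff.2 fun i hi => ?_
  simp only [mem_suppF, not_not] at hi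
  simp [hi]

theorem suppF_sub_subset : suppF (u - z) ⊆ suppF u ∪ suppF z := by
  refine suppF_subset_iff.2 fun i hi => ?_
  simp only [mem_union, mem_suppF, not_or, not_not] at hi
  simp [hi]

theorem restrict_apply (i : Fin n) : restrict x S i = if i ∈ S then x i else 0 := rfl

theorem suppF_restrict : suppF (restrict x S) = suppF x ∩ S := by
  ext i
  simp [mem_suppF, restrict_apply, and_comm]

theorem restrict_suppF : restrict x (suppF x) = x := by
  ext i
  simp +contextual [restrict_apply, mem_suppF]

theorem sub_restrict_suppF_sdiff : x - restrict x (suppF x \ S) = restrict x S := by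
  ext i
  by_cases hS : i ∈ S <;> by_cases hx : x i = 0 <;>
    simp [restrict_apply, mem_suppF, hS, hx]

theorem inner_restrict_left : inner ℝ (restrict x S) u = ∑ i ∈ S, x i * u i := by
  simp [PiLp.inner_apply, restrict_apply, mul_comm]

theorem norm_restrict_sq : ‖restrict x S‖ ^ 2 = ∑ i ∈ S, x i ^ 2 := by
  simp [EuclideanSpace.real_norm_sq_eq, restrict_apply]

theorem norm_restrict_sq_sdiff_add (hA : A ⊆ Γ) :
    ‖restrict x (Γ \ A)‖ ^ 2 + ‖restrict x A‖ ^ 2 = ‖restrict x Γ‖ ^ 2 := by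
  simp only [norm_restrict_sq, sum_sdiff hA]

theorem norm_restrict_sq_le (h : ∀ i ∈ S, |x i| ≤ c) : ‖restrict x S‖ ^ 2 ≤ #S * c ^ 2 := by
  rw [norm_restrict_sq, ← nsmul_eq_mul]
  exact sum_le_card_nsmul _ _ _ fun i hi => sq_le_sq' (abs_le.1 (h i hi)).1 (abs_le.1 (h i hi)).2

theorem le_norm_restrict_sq (hc : 0 ≤ c) (h : ∀ i ∈ S, c ≤ |x i|) :
    #S * c ^ 2 ≤ ‖restrict x S‖ ^ 2 := by
  rw [norm_restrict_sq, ← nsmul_eq_mul]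
  refine card_nsmul_le_sum _ _ _ fun i hi => ?_
  rw [← sq_abs (x i)]
  gcongr
  exact h i hi

theorem inner_restrict_sub (hA : A ⊆ suppF x \ S) (hz : suppF z ⊆ S) :
    inner ℝ (restrict x A) (x - z) = ‖restrict x A‖ ^ 2 := by
  rw [inner_restrict_left, norm_restrict_sq]
  refine sum_congr rfl fun i hi => ?_
  rw [PiLp.sub_apply, suppF_subset_iff.1 hz i (mem_sdiff.1 (hA hi)).2]
  ring

end Support

section LargestEntries

/-- `A` carries the `#A` largest magnitudes of `x` on `Γ`, and `w` is the smallest of these. This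
models the entries counted by the order statistic `kthLargest x Γ #A`; because of ties, `A` need
not be determined by its cardinality. -/
structure IsTopSubset {n : ℕ} (x : Vec n) (Γ A : Finset (Fin n)) (w : ℝ) : Prop where
  subset : A ⊆ Γ
  attained : ∃ i ∈ A, |x i| = w
  le_abs : ∀ i ∈ A, w ≤ |x i|
  abs_le : ∀ i ∈ Γ \ A, |x i| ≤ w

variable {n : ℕ} {x : Vec n} {Γ A : Finset (Fin n)} {w : ℝ} {j : ℕ}

namespace IsTopSubset

theorem nonneg (hA : IsTopSubset x Γ A w) : 0 ≤ w := by
  obtain ⟨i, -, rfl⟩ := hA.attained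
  exact abs_nonneg _

theorem card_pos (hA : IsTopSubset x Γ A w) : 0 < #A :=
  let ⟨i, hi, _⟩ := hA.attained
  Finset.card_pos.2 ⟨i, hi⟩

theorem card_mul_sq_le (hA : IsTopSubset x Γ A w) : #A * w ^ 2 ≤ ‖restrict x A‖ ^ 2 :=
  le_norm_restrict_sq hA.nonneg hA.le_abs

theorem card_mul_norm_restrict_sq_le (hA : IsTopSubset x Γ A w) :
    #A * ‖restrict x Γ‖ ^ 2 ≤ #Γ * ‖restrict x A‖ ^ 2 := by
  have hcard : (#(Γ \ A) + #A : ℝ) = #Γ := mod_cast card_sdiff_add_card_eq_card hA.subset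
  calc #A * ‖restrict x Γ‖ ^ 2
      = #A * ‖restrict x (Γ \ A)‖ ^ 2 + #A * ‖restrict x A‖ ^ 2 := by
        rw [← norm_restrict_sq_sdiff_add hA.subset, mul_add]
    _ ≤ #A * (#(Γ \ A) * w ^ 2) + #A * ‖restrict x A‖ ^ 2 := by
        gcongr
        exact norm_restrict_sq_le hA.abs_le
    _ = #(Γ \ A) * (#A * w ^ 2) + #A * ‖restrict x A‖ ^ 2 := by ring
    _ ≤ #(Γ \ A) * ‖restrict x A‖ ^ 2 + #A * ‖restrict x A‖ ^ 2 := by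
        gcongr
        exact hA.card_mul_sq_le
    _ = #Γ * ‖restrict x A‖ ^ 2 := by rw [← hcard, add_mul]

theorem mul_norm_restrict_le {τ : ℝ} (hA : IsTopSubset x Γ A w) (hτ0 : 0 ≤ τ) (hτ1 : τ ≤ 1)
    (hs : τ * #Γ ≤ #A) : τ * ‖restrict x Γ‖ ≤ ‖restrict x A‖ := by
  have hA0 : (0 : ℝ) < #A := mod_cast hA.card_pos
  have hmul : #A * (τ * ‖restrict x Γ‖ ^ 2) ≤ #A * ‖restrict x A‖ ^ 2 :=
    calc #A * (τ * ‖restrict x Γ‖ ^ 2) = τ * (#A * ‖restrict x Γ‖ ^ 2) := by ring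
      _ ≤ τ * (#Γ * ‖restrict x A‖ ^ 2) :=
        mul_le_mul_of_nonneg_left hA.card_mul_norm_restrict_sq_le hτ0
      _ = τ * #Γ * ‖restrict x A‖ ^ 2 := by ring
      _ ≤ #A * ‖restrict x A‖ ^ 2 := by gcongr
  refine le_of_sq_le_sq ?_ (norm_nonneg _)
  calc (τ * ‖restrict x Γ‖) ^ 2 = τ * (τ * ‖restrict x Γ‖ ^ 2) := by ring
    _ ≤ 1 * (τ * ‖restrict x Γ‖ ^ 2) := by gcongr
    _ ≤ ‖restrict x A‖ ^ 2 := by rw [one_mul]; exact le_of_mul_le_mul_left hmul hA0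

end IsTopSubset

theorem exists_list_sort_map_eq {ι α : Type*} [LinearOrder α] (f : ι → α) (s : Multiset ι) :
    ∃ l : List ι, (l : Multiset ι) = s ∧ (s.map f).sort (· ≤ ·) = l.map f := by
  let l := s.toList.mergeSort fun i j => f i ≤ f j
  have hl : (l : Multiset ι) = s :=
    (Multiset.coe_eq_coe.2 (List.mergeSort_perm _ _)).trans s.coe_toList
  have hsorted : (l.map f).Pairwise (· ≤ ·) :=
    List.pairwise_map.2 <| by
      simpa using List.pairwise_mergeSort (le := fun i j => decide (f i ≤ f j))
        (by simpa using fun a b c => le_trans) (by simpa using fun a b => le_total _ _) s.toList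
  refine ⟨l, hl, List.Perm.eq_of_pairwise' (Multiset.pairwise_sort _ _) hsorted ?_⟩
  rw [← Multiset.coe_eq_coe, Multiset.sort_eq, ← hl, Multiset.map_coe]

theorem isTopSubset_of_sorted_append_cons {l₁ l₂ : List (Fin n)} {i : Fin n}
    (hmem : ∀ k, k ∈ l₁ ++ i :: l₂ ↔ k ∈ Γ)
    (hsorted : (l₁ ++ i :: l₂).Pairwise fun k k' => |x k| ≤ |x k'|) :
    IsTopSubset x Γ (i :: l₂).toFinset |x i| := by
  obtain ⟨-, htop, hbot⟩ := List.pairwise_append.1 hsorted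
  refine ⟨fun k hk => ?_, ⟨i, by simp, rfl⟩, fun k hk => ?_, fun k hk => ?_⟩
  · exact (hmem k).1 (List.mem_append_right _ (List.mem_toFinset.1 hk))
  · rcases List.mem_cons.1 (List.mem_toFinset.1 hk) with rfl | hk
    · exact le_rfl
    · exact (List.pairwise_cons.1 htop).1 k hk
  · obtain ⟨hkΓ, hkA⟩ := mem_sdiff.1 hk
    rw [← hmem, List.mem_append] at hkΓ
    exact hbot k (hkΓ.resolve_right fun h => hkA (List.mem_toFinset.2 h)) i List.mem_cons_self

theorem exists_isTopSubset_kthLargest (hj : 1 ≤ j) (hjΓ : j ≤ #Γ) :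
    ∃ A, #A = j ∧ IsTopSubset x Γ A (kthLargest x Γ j) := by
  obtain ⟨l, hl, hsort⟩ := exists_list_sort_map_eq (fun i => |x i|) Γ.val
  have hlen : l.length = #Γ := by rw [← Multiset.coe_card, hl, card_val]
  have hnodup : l.Nodup := Multiset.coe_nodup.1 (hl ▸ Γ.nodup)
  have hmem (i : Fin n) : i ∈ l ↔ i ∈ Γ := by rw [← mem_val, ← hl, Multiset.mem_coe]
  have hsorted : l.Pairwise fun i j => |x i| ≤ |x j| :=
    List.pairwise_map.1 (hsort ▸ Multiset.pairwise_sort _ _)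
  have hd : #Γ - j < l.length := by lia
  have hdrop := List.drop_eq_getElem_cons hd
  have hsplit : l = l.take (#Γ - j) ++ l[#Γ - j] :: l.drop (#Γ - j + 1) := by
    rw [← hdrop, List.take_append_drop]
  have hkth : kthLargest x Γ j = |x l[#Γ - j]| := by
    rw [kthLargest, if_pos ⟨hj, hjΓ⟩, hsort, List.getD_eq_getElem _ _ (by simpa using hd),
      List.getElem_map]
  refine ⟨(l.drop (#Γ - j)).toFinset, ?_, ?_⟩
  · rw [List.toFinset_card_of_nodup hnodup.drop, List.length_drop]
    lia
  · rw [hkth, hdrop]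
    rw [hsplit] at hsorted
    exact isTopSubset_of_sorted_append_cons (fun i => by rw [← hsplit, hmem]) hsorted

end LargestEntries

section RestrictedIsometry

variable {m n : ℕ} {Φ : Matrix (Fin m) (Fin n) ℝ} {u z x : Vec n} {L : ℕ} {δ c : ℝ}
  {S A : Finset (Fin n)}

theorem mulVec'_eq_toEuclideanLin : mulVec' Φ u = Φ.toEuclideanLin u := rfl

theorem inner_mulVec'_left (r : Vec m) :
    inner ℝ (mulVec' Φ u) r = inner ℝ u (.toLp 2 (dualVec Φ r)) := by
  simp only [PiLp.inner_apply, mulVec', dualVec, dot, col, RCLike.inner_apply, conj_trivial,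
    mul_sum, sum_mul]
  rw [sum_comm]
  exact sum_congr rfl fun j _ => sum_congr rfl fun i _ => by ring

theorem inner_mulVec'_restrict_sq_le (r : Vec m) :
    inner ℝ (mulVec' Φ (restrict x A)) r ^ 2 ≤
      ‖restrict x A‖ ^ 2 * (#A * ‖dualVec Φ r‖ ^ 2) := by
  rw [inner_mulVec'_left, inner_restrict_left, norm_restrict_sq]
  refine (sum_mul_sq_le_sq_mul_sq _ _ _).trans ?_
  gcongr
  rw [← norm_restrict_sq]
  exact norm_restrict_sq_le fun i _ => norm_le_pi_norm (dualVec Φ r) i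

/-- `Φ` satisfies the restricted isometry bounds of order `L` with constant `δ`. Unlike in
`RIPConst`, the constant need not be the smallest possible. -/
def HasRIP {m n : ℕ} (Φ : Matrix (Fin m) (Fin n) ℝ) (L : ℕ) (δ : ℝ) : Prop :=
  ∀ u : Vec n, #(suppF u) ≤ L →
    (1 - δ) * ‖u‖ ^ 2 ≤ ‖mulVec' Φ u‖ ^ 2 ∧ ‖mulVec' Φ u‖ ^ 2 ≤ (1 + δ) * ‖u‖ ^ 2

theorem RIPConst.hasRIP_sqrt_sq (h : RIPConst Φ L δ) : HasRIP Φ L (√δ ^ 2) := by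
  rw [Real.sq_sqrt h.1.1]
  exact h.1.2

namespace HasRIP

theorem norm_mulVec'_le (h : HasRIP Φ L δ) (hu : #(suppF u) ≤ L) (hc : 0 ≤ c)
    (hδ : 1 + δ ≤ c ^ 2) : ‖mulVec' Φ u‖ ≤ c * ‖u‖ := by
  refine le_of_sq_le_sq ?_ (by positivity)
  rw [mul_pow]
  exact (h u hu).2.trans (by gcongr)

theorem mul_norm_le_norm_mulVec' (h : HasRIP Φ L δ) (hu : #(suppF u) ≤ L)
    (hδ : c ^ 2 ≤ 1 - δ) : c * ‖u‖ ≤ ‖mulVec' Φ u‖ := by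
  refine le_of_sq_le_sq ?_ (norm_nonneg _)
  rw [mul_pow]
  exact le_trans (by gcongr) (h u hu).1

theorem abs_inner_mulVec'_sub_inner_le_half (h : HasRIP Φ L δ)
    (huz : #(suppF u ∪ suppF z) ≤ L) :
    |inner ℝ (mulVec' Φ u) (mulVec' Φ z) - inner ℝ u z| ≤ δ / 2 * (‖u‖ ^ 2 + ‖z‖ ^ 2) := by
  obtain ⟨hadd_lower, hadd_upper⟩ := h (u + z) ((card_le_card suppF_add_subset).trans huz)
  obtain ⟨hsub_lower, hsub_upper⟩ := h (u - z) ((card_le_card suppF_sub_subset).trans huz)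
  simp only [mulVec'_eq_toEuclideanLin, map_add, map_sub, norm_add_sq_real, norm_sub_sq_real]
    at hadd_lower hadd_upper hsub_lower hsub_upper ⊢
  rw [abs_le]
  constructor <;> linarith

theorem abs_inner_mulVec'_sub_inner_le (h : HasRIP Φ L δ) (huz : #(suppF u ∪ suppF z) ≤ L) :
    |inner ℝ (mulVec' Φ u) (mulVec' Φ z) - inner ℝ u z| ≤ δ * (‖u‖ * ‖z‖) := by
  rcases eq_or_ne u 0 with rfl | hu
  · simp [mulVec'_eq_toEuclideanLin]
  rcases eq_or_ne z 0 with rfl | hz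
  · simp [mulVec'_eq_toEuclideanLin]
  have hpos : 0 < ‖z‖ * ‖u‖ := by positivity
  -- Rescale both vectors to the common norm `‖u‖ * ‖z‖`, where the arithmetic mean is the product.
  have hscaled := h.abs_inner_mulVec'_sub_inner_le_half (u := ‖z‖ • u) (z := ‖u‖ • z)
    ((card_le_card (union_subset_union suppF_smul_subset suppF_smul_subset)).trans huz)
  simp only [mulVec'_eq_toEuclideanLin, map_smul, inner_smul_left, inner_smul_right, conj_trivial,
    ← mul_sub, abs_mul, abs_norm, norm_smul, norm_norm] at hscaled
  refine le_of_mul_le_mul_left ?_ hpos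
  calc ‖z‖ * ‖u‖ * |inner ℝ (mulVec' Φ u) (mulVec' Φ z) - inner ℝ u z|
      ≤ δ / 2 * ((‖z‖ * ‖u‖) ^ 2 + (‖u‖ * ‖z‖) ^ 2) := by
        refine le_of_eq_of_le ?_ hscaled
        rw [mulVec'_eq_toEuclideanLin, mulVec'_eq_toEuclideanLin]
        ring
    _ = ‖z‖ * ‖u‖ * (δ * (‖u‖ * ‖z‖)) := by ring

theorem le_inner_mulVec'_restrict_sub (h : HasRIP Φ L δ) (hL : #(suppF x ∪ S) ≤ L)
    (hA : A ⊆ suppF x \ S) (hz : suppF z ⊆ S) :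
    ‖restrict x A‖ ^ 2 - δ * (‖restrict x A‖ * ‖x - z‖) ≤
      inner ℝ (mulVec' Φ (restrict x A)) (mulVec' Φ (x - z)) := by
  have hsupp : suppF (restrict x A) ∪ suppF (x - z) ⊆ suppF x ∪ S :=
    union_subset (suppF_restrict.trans_subset (inter_subset_left.trans subset_union_left))
      (suppF_sub_subset.trans (union_subset_union_right hz))
  have := (abs_le.1 (h.abs_inner_mulVec'_sub_inner_le ((card_le_card hsupp).trans hL))).1
  rw [inner_restrict_sub hA hz] at this
  linarith

end HasRIP

end RestrictedIsometry

section LeastSquares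

variable {m n : ℕ} {Φ : Matrix (Fin m) (Fin n) ℝ} {x z : Vec n} {v y : Vec m} {S : Finset (Fin n)}

/-- `z` is a least-squares solution of `Φ u ≈ y` among the vectors `u` supported on `S`. These are
the estimates of OMP, with `S` the set of indices selected so far. -/
structure IsLeastSquares (Φ : Matrix (Fin m) (Fin n) ℝ) (y : Vec m) (S : Finset (Fin n))
    (z : Vec n) : Prop where
  suppF_subset : suppF z ⊆ S
  norm_residual_le : ∀ u : Vec n, suppF u ⊆ S → ‖y - mulVec' Φ z‖ ≤ ‖y - mulVec' Φ u‖

theorem IsLeastSquares.norm_mulVec'_sub_le (hz : IsLeastSquares Φ (mulVec' Φ x + v) S z) :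
    ‖mulVec' Φ (x - z)‖ ≤ ‖mulVec' Φ (restrict x (suppF x \ S))‖ + 2 * ‖v‖ := by
  have hmin := hz.norm_residual_le (restrict x S) (suppF_restrict.trans_subset inter_subset_right)
  have hcompetitor : mulVec' Φ x + v - mulVec' Φ (restrict x S) =
      mulVec' Φ (restrict x (suppF x \ S)) + v := by
    rw [← sub_restrict_suppF_sdiff]
    simp only [mulVec'_eq_toEuclideanLin, map_sub]
    abel
  calc ‖mulVec' Φ (x - z)‖ = ‖mulVec' Φ x + v - mulVec' Φ z - v‖ := by
        simp only [mulVec'_eq_toEuclideanLin, map_sub]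
        congr 1
        abel
    _ ≤ ‖mulVec' Φ x + v - mulVec' Φ z‖ + ‖v‖ := norm_sub_le _ _
    _ ≤ ‖mulVec' Φ (restrict x (suppF x \ S)) + v‖ + ‖v‖ := by rw [← hcompetitor]; gcongr
    _ ≤ ‖mulVec' Φ (restrict x (suppF x \ S))‖ + ‖v‖ + ‖v‖ := by gcongr; exact norm_add_le _ _
    _ = ‖mulVec' Φ (restrict x (suppF x \ S))‖ + 2 * ‖v‖ := by ring

namespace OMPRun

variable {N k : ℕ}

theorem card_sets_le (run : OMPRun Φ y N) (hk : k ≤ N) : #(run.sets k) ≤ k := by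
  induction k with
  | zero => simp [run.sets_zero]
  | succ k ih =>
    rw [run.sets_succ k hk]
    exact (card_insert_le _ _).trans (Nat.succ_le_succ (ih (Nat.le_of_succ_le hk)))

theorem res_eq (run : OMPRun Φ y N) (hk : k ≤ N) : run.res k = y - mulVec' Φ (run.est k) := by
  cases k with
  | zero => simp [run.res_zero, run.est_zero, mulVec'_eq_toEuclideanLin]
  | succ k => exact run.res_succ k hk

theorem isLeastSquares (run : OMPRun Φ y N) (hk : k ≤ N) :
    IsLeastSquares Φ y (run.sets k) (run.est k) := by
  cases k with
  | zero =>
    rw [run.sets_zero, run.est_zero]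
    refine ⟨suppF_subset_iff.2 fun _ _ => rfl, fun u hu => ?_⟩
    have hu0 : u = 0 := by
      ext i
      exact suppF_subset_iff.1 hu i (notMem_empty i)
    rw [hu0]
  | succ k => exact ⟨run.est_supp k hk, run.est_min k hk⟩

end OMPRun

end LeastSquares

section SignalToNoise

variable {m n : ℕ} {Φ : Matrix (Fin m) (Fin n) ℝ} {x : Vec n} {v : Vec m}

theorem abs_le_sup'_div_mul_abs {T : Finset (Fin n)} (hT : (T ×ˢ T).Nonempty) {i j : Fin n}
    (hi : i ∈ T) (hj : j ∈ T) (hxj : x j ≠ 0) :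
    |x i| ≤ ((T ×ˢ T).sup' hT fun p => |x p.1| / |x p.2|) * |x j| :=
  (div_le_iff₀ (abs_pos.2 hxj)).1 <|
    le_sup' (fun p : Fin n × Fin n => |x p.1| / |x p.2|) (mk_mem_product hi hj)

theorem sq_mul_norm_sq_le_of_le_SNR {κ δ : ℝ} (hδ : 0 < δ) (hv : v ≠ 0)
    (h : κ ^ 2 * δ ^ (-(3 : ℝ) / 2) ≤ SNR Φ x v) :
    κ ^ 2 * ‖v‖ ^ 2 ≤ √δ ^ 3 * ‖mulVec' Φ x‖ ^ 2 := by
  have hrpow : δ ^ (-(3 : ℝ) / 2) = (√δ ^ 3)⁻¹ := by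
    rw [Real.sqrt_eq_rpow, ← Real.rpow_mul_natCast hδ.le, ← Real.rpow_neg hδ.le]
    norm_num
  have hv0 : 0 < ‖v‖ ^ 2 := by positivity
  rw [hrpow, SNR, le_div_iff₀ hv0, mul_right_comm, ← div_eq_mul_inv,
    div_le_iff₀ (by positivity)] at h
  rwa [mul_comm (√δ ^ 3)]

theorem IsTopSubset.norm_noise_le {Γ A : Finset (Fin n)} {β κ τ w : ℝ} (hA : IsTopSubset x Γ A w)
    (hΓ : Γ ⊆ suppF x) (hs : τ * #(suppF x) ≤ #A) (hβ : 0 ≤ β) (hτ : 0 ≤ τ)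
    (hΦ : ‖mulVec' Φ x‖ ≤ β * ‖x‖) (hκ : ∀ i ∈ suppF x, ∀ j ∈ suppF x, |x i| ≤ κ * |x j|)
    (hv : κ ^ 2 * ‖v‖ ^ 2 ≤ τ ^ 3 * ‖mulVec' Φ x‖ ^ 2) :
    ‖v‖ ≤ β * τ * ‖restrict x A‖ := by
  obtain ⟨i, hiA, hiw⟩ := hA.attained
  have hi : i ∈ suppF x := hΓ (hA.subset hiA)
  have hi0 : 0 < |x i| := abs_pos.2 (mem_suppF.1 hi)
  have hκ0 : 0 < κ := pos_of_mul_pos_left (hi0.trans_le (hκ i hi i hi)) hi0.le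
  have hx : ‖x‖ ^ 2 ≤ #(suppF x) * (κ * w) ^ 2 := by
    have := norm_restrict_sq_le fun j hj => hiw ▸ hκ j hj i hi
    rwa [restrict_suppF] at this
  refine le_of_sq_le_sq (le_of_mul_le_mul_left ?_ (pow_pos hκ0 2)) (by positivity)
  calc κ ^ 2 * ‖v‖ ^ 2 ≤ τ ^ 3 * (β * ‖x‖) ^ 2 := hv.trans (by gcongr)
    _ ≤ τ ^ 3 * (β ^ 2 * (#(suppF x) * (κ * w) ^ 2)) := by rw [mul_pow]; gcongr
    _ = κ ^ 2 * (β * τ) ^ 2 * (τ * #(suppF x) * w ^ 2) := by ring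
    _ ≤ κ ^ 2 * (β * τ) ^ 2 * ‖restrict x A‖ ^ 2 := by
        gcongr
        exact le_trans (by gcongr) hA.card_mul_sq_le
    _ = κ ^ 2 * (β * τ * ‖restrict x A‖) ^ 2 := by ring

end SignalToNoise

section ResidualCorrelation

variable {m n L : ℕ} {Φ : Matrix (Fin m) (Fin n) ℝ} {τ κ w : ℝ} {x z : Vec n} {v : Vec m}
  {S A : Finset (Fin n)}

-- For `τ ≤ 1/6` the isometry bounds are `1 + τ² ≤ (11/10)²` and `(9/10)² ≤ 1 - τ²`.
theorem IsLeastSquares.mul_norm_sub_le (hz : IsLeastSquares Φ (mulVec' Φ x + v) S z)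
    (hRIP : HasRIP Φ L (τ ^ 2)) (hL : #(suppF x ∪ S) ≤ L) (hτ0 : 0 ≤ τ) (hτ : τ ≤ 1 / 6)
    (hA : IsTopSubset x (suppF x \ S) A w) (hs : τ * #(suppF x) ≤ #A)
    (hv : ‖v‖ ≤ 11 / 10 * τ * ‖restrict x A‖) :
    τ * ‖x - z‖ ≤ 13 / 10 * ‖restrict x A‖ := by
  set Γ := suppF x \ S
  have hΓcard : (#Γ : ℝ) ≤ #(suppF x) := mod_cast card_le_card sdiff_subset
  have hΓ : τ * ‖restrict x Γ‖ ≤ ‖restrict x A‖ :=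
    hA.mul_norm_restrict_le hτ0 (by linarith) (le_trans (by gcongr) hs)
  have hupper : ‖mulVec' Φ (restrict x Γ)‖ ≤ 11 / 10 * ‖restrict x Γ‖ := by
    refine hRIP.norm_mulVec'_le ((card_le_card ?_).trans hL) (by norm_num) (by nlinarith)
    exact suppF_restrict.trans_subset (inter_subset_left.trans subset_union_left)
  have hlower : 9 / 10 * ‖x - z‖ ≤ ‖mulVec' Φ (x - z)‖ := by
    refine hRIP.mul_norm_le_norm_mulVec' ((card_le_card ?_).trans hL) (by nlinarith)
    exact suppF_sub_subset.trans (union_subset_union_right hz.suppF_subset)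
  have hnoise : τ * ‖v‖ ≤ 11 / 360 * ‖restrict x A‖ :=
    calc τ * ‖v‖ ≤ 1 / 6 * (11 / 10 * (1 / 6) * ‖restrict x A‖) := by
          gcongr
          exact hv.trans (by gcongr)
      _ = 11 / 360 * ‖restrict x A‖ := by ring
  have hchain : 9 / 10 * ‖x - z‖ ≤ 11 / 10 * ‖restrict x Γ‖ + 2 * ‖v‖ := by
    linarith [hz.norm_mulVec'_sub_le]
  have := mul_le_mul_of_nonneg_left hchain hτ0
  linarith [norm_nonneg (restrict x A)]

theorem IsLeastSquares.le_inner_mulVec'_restrict_residual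
    (hz : IsLeastSquares Φ (mulVec' Φ x + v) S z)
    (hRIP : HasRIP Φ L (τ ^ 2)) (hL : #(suppF x ∪ S) ≤ L) (hτ0 : 0 ≤ τ) (hτ : τ ≤ 1 / 6)
    (hA : IsTopSubset x (suppF x \ S) A w) (hs : τ * #(suppF x) ≤ #A)
    (hv : ‖v‖ ≤ 11 / 10 * τ * ‖restrict x A‖) :
    (1 - 3 * τ) * ‖restrict x A‖ ^ 2 ≤
      inner ℝ (mulVec' Φ (restrict x A)) (mulVec' Φ x + v - mulVec' Φ z) := by
  have hres : mulVec' Φ x + v - mulVec' Φ z = mulVec' Φ (x - z) + v := by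
    simp only [mulVec'_eq_toEuclideanLin, map_sub]
    abel
  have hsignal := hRIP.le_inner_mulVec'_restrict_sub hL hA.subset hz.suppF_subset
  have herror : τ ^ 2 * (‖restrict x A‖ * ‖x - z‖) ≤ 13 / 10 * τ * ‖restrict x A‖ ^ 2 :=
    calc τ ^ 2 * (‖restrict x A‖ * ‖x - z‖) = τ * ‖restrict x A‖ * (τ * ‖x - z‖) := by ring
      _ ≤ τ * ‖restrict x A‖ * (13 / 10 * ‖restrict x A‖) := by
          exact mul_le_mul_of_nonneg_left (hz.mul_norm_sub_le hRIP hL hτ0 hτ hA hs hv)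
            (by positivity)
      _ = 13 / 10 * τ * ‖restrict x A‖ ^ 2 := by ring
  have hnoise : -(121 / 100 * τ * ‖restrict x A‖ ^ 2) ≤ inner ℝ (mulVec' Φ (restrict x A)) v := by
    have hupper : ‖mulVec' Φ (restrict x A)‖ ≤ 11 / 10 * ‖restrict x A‖ := by
      refine hRIP.norm_mulVec'_le ((card_le_card ?_).trans hL) (by norm_num) (by nlinarith)
      exact suppF_restrict.trans_subset (inter_subset_left.trans subset_union_left)
    refine neg_le_of_abs_le ((abs_real_inner_le_norm _ _).trans ?_)
    calc ‖mulVec' Φ (restrict x A)‖ * ‖v‖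
        ≤ 11 / 10 * ‖restrict x A‖ * (11 / 10 * τ * ‖restrict x A‖) := by gcongr
      _ = 121 / 100 * τ * ‖restrict x A‖ ^ 2 := by ring
  have hτA : 0 ≤ τ * ‖restrict x A‖ ^ 2 := by positivity
  rw [hres, inner_add_right]
  linarith

theorem IsTopSubset.sq_le_norm_dualVec_sq {Γ : Finset (Fin n)} (hA : IsTopSubset x Γ A w)
    {r : Vec m} (hτ : τ ≤ 1 / 6)
    (hr : (1 - 3 * τ) * ‖restrict x A‖ ^ 2 ≤ inner ℝ (mulVec' Φ (restrict x A)) r) :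
    (1 - 6 * τ) * w ^ 2 ≤ ‖dualVec Φ r‖ ^ 2 := by
  have hA0 : (0 : ℝ) < #A := mod_cast hA.card_pos
  have henergy : (1 - 6 * τ) * ‖restrict x A‖ ^ 2 ≤ #A * ‖dualVec Φ r‖ ^ 2 := by
    rcases eq_or_ne (restrict x A) 0 with h0 | h0
    · rw [h0]
      simpa using by positivity
    have hcoef : 0 ≤ (1 - 3 * τ) * ‖restrict x A‖ ^ 2 :=
      mul_nonneg (by linarith) (sq_nonneg _)
    refine le_of_mul_le_mul_left ?_ (show 0 < ‖restrict x A‖ ^ 2 by positivity)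
    calc ‖restrict x A‖ ^ 2 * ((1 - 6 * τ) * ‖restrict x A‖ ^ 2)
        ≤ ((1 - 3 * τ) * ‖restrict x A‖ ^ 2) ^ 2 := by
          linarith [sq_nonneg (τ * ‖restrict x A‖ ^ 2)]
      _ ≤ inner ℝ (mulVec' Φ (restrict x A)) r ^ 2 := by gcongr
      _ ≤ ‖restrict x A‖ ^ 2 * (#A * ‖dualVec Φ r‖ ^ 2) := inner_mulVec'_restrict_sq_le r
  refine le_of_mul_le_mul_left ?_ hA0
  calc #A * ((1 - 6 * τ) * w ^ 2) = (1 - 6 * τ) * (#A * w ^ 2) := by ring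
    _ ≤ (1 - 6 * τ) * ‖restrict x A‖ ^ 2 :=
        mul_le_mul_of_nonneg_left hA.card_mul_sq_le (by linarith)
    _ ≤ #A * ‖dualVec Φ r‖ ^ 2 := henergy

theorem stmt9_general {s : ℕ} (hRIP : HasRIP Φ L (τ ^ 2)) (hL : #(suppF x ∪ S) ≤ L) (hτ0 : 0 ≤ τ)
    (hs : τ * #(suppF x) ≤ s) (hκ : ∀ i ∈ suppF x, ∀ j ∈ suppF x, |x i| ≤ κ * |x j|)
    (hv : κ ^ 2 * ‖v‖ ^ 2 ≤ τ ^ 3 * ‖mulVec' Φ x‖ ^ 2)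
    (hz : IsLeastSquares Φ (mulVec' Φ x + v) S z) :
    (1 - 6 * τ) * kthLargest x (suppF x \ S) s ^ 2 ≤
      ‖dualVec Φ (mulVec' Φ x + v - mulVec' Φ z)‖ ^ 2 := by
  rcases lt_or_ge (1 / 6) τ with hτ | hτ
  · have hneg : 1 - 6 * τ ≤ 0 := by linarith
    exact (mul_nonpos_of_nonpos_of_nonneg hneg (sq_nonneg _)).trans (sq_nonneg _)
  by_cases hsΓ : 1 ≤ s ∧ s ≤ #(suppF x \ S)
  · obtain ⟨A, rfl, hA⟩ := exists_isTopSubset_kthLargest (x := x) hsΓ.1 hsΓ.2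
    have hΦ : ‖mulVec' Φ x‖ ≤ 11 / 10 * ‖x‖ :=
      hRIP.norm_mulVec'_le ((card_le_card subset_union_left).trans hL) (by norm_num) (by nlinarith)
    have hnoise := hA.norm_noise_le sdiff_subset hs (by norm_num) hτ0 hΦ hκ hv
    exact hA.sq_le_norm_dualVec_sq hτ
      (hz.le_inner_mulVec'_restrict_residual hRIP hL hτ0 hτ hA hs hnoise)
  · simp [kthLargest, hsΓ]

end ResidualCorrelation

/-- lower bound on the maximal correlation of the residual:
`‖Φᵀ r^k‖_∞² ≥ (1 − 6τ)(x_τ^k)²` for `0 ≤ k ≤ K − ⌈τK⌉`, `τ = δ^{1/2}`. -/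
theorem stmt9 {m n K : ℕ} (Φ : Matrix (Fin m) (Fin n) ℝ) (δ : ℝ)
    (x : Vec n) (v y : Vec m) (T : Finset (Fin n)) (hTne : T.Nonempty)
    (hsupp : suppF x = T) (hcard : T.card = K) (hK1 : 1 ≤ K)
    (hRIP : RIPConst Φ (2 * K) δ) (h0 : 0 < δ) (h1 : δ < 1)
    (hv : v ≠ 0) (hy : y = mulVec' Φ x + v)
    (hSNR : SNR Φ x v ≥
      (((T ×ˢ T).sup' (hTne.product hTne) fun p => |x p.1| / |x p.2|)) ^ 2
        * δ ^ (-(3 : ℝ) / 2))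
    (run : OMPRun Φ y K) :
    ∀ k : ℕ, k ≤ K - ⌈Real.sqrt δ * K⌉₊ →
      (1 - 6 * Real.sqrt δ) *
          (kthLargest x (T \ run.sets k) ⌈Real.sqrt δ * K⌉₊) ^ 2 ≤
        ‖dualVec Φ (run.res k)‖ ^ 2 := by
  intro k hk
  subst hy hsupp
  have hkK : k ≤ K := hk.trans (Nat.sub_le _ _)
  have hcard_union : #(suppF x ∪ run.sets k) ≤ 2 * K := by
    grw [card_union_le, run.card_sets_le hkK]
    lia
  rw [run.res_eq hkK]
  exact stmt9_general hRIP.hasRIP_sqrt_sq hcard_union (Real.sqrt_nonneg δ)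
    (hcard ▸ Nat.le_ceil _)
    (fun i hi j hj => abs_le_sup'_div_mul_abs _ hi hj (mem_suppF.1 hj))
    (sq_mul_norm_sq_le_of_le_SNR h0 hv hSNR) (run.isLeastSquares hkK)

end
end

section
/- Let Φ ∈ ℝ^{m×n} have restricted isometry constant δ_{K+1} < 1/(√K + 1), let x ∈ ℝ^n be K-sparse with support T, |T| = K ≥ 1, and let y = Φx + v with v ≠ 0. If √SNR > (√K + 1)(1 + δ_{K+1}) / (1 − (√K + 1)δ_{K+1}), then every run of OMP applied to (Φ, y) selects a correct index at the first iteration, i.e., t^1 ∈ T. -/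
noncomputable section
open Finset

/-! If `t¹ ∉ T` maximizes the correlations `|⟨φ_i, y⟩|`, then `⟨Φx, y⟩ = ∑ x_i ⟨φ_i, y⟩` is at most
`‖x‖₁ |⟨φ_{t¹}, y⟩| ≤ √K ‖x‖ (δ ‖x‖ + √(1 + δ) ‖v‖)`, because an off-support column is almost
orthogonal to `Φx`. On the other hand `⟨Φx, y⟩ = ‖Φx‖² + ⟨Φx, v⟩ ≥ (1 - δ) ‖x‖² - √(1 + δ) ‖x‖ ‖v‖`.
The two bounds are incompatible once `(√K + 1) √(1 + δ) ‖v‖ < (1 - (√K + 1) δ) ‖x‖`, which the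
condition on the SNR implies through `‖Φx‖ ≤ √(1 + δ) ‖x‖`. -/

section RestrictedIsometry

open scoped InnerProductSpace

variable {F E : Type*} [NormedAddCommGroup F] [InnerProductSpace ℝ F]
  [SeminormedAddCommGroup E] [InnerProductSpace ℝ E]

/-- Polarization, applied to `‖w‖ • u` and `‖u‖ • w` because they have equal norms. -/
lemma abs_inner_map_sub_inner_le_of_abs_norm_sq_sub_le {A : F →ₗ[ℝ] E} {δ : ℝ}
    (hA : ∀ z, |‖A z‖ ^ 2 - ‖z‖ ^ 2| ≤ δ * ‖z‖ ^ 2) (u w : F) :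
    |⟪A u, A w⟫_ℝ - ⟪u, w⟫_ℝ| ≤ δ * (‖u‖ * ‖w‖) := by
  rcases eq_or_ne u 0 with rfl | hu
  · simp
  rcases eq_or_ne w 0 with rfl | hw
  · simp
  have hpos : 0 < 4 * (‖u‖ * ‖w‖) := by positivity
  set a := ‖w‖ • u with ha
  set b := ‖u‖ • w with hb
  have hpolar : 4 * (‖u‖ * ‖w‖) * (⟪A u, A w⟫_ℝ - ⟪u, w⟫_ℝ) =
      (‖A (a + b)‖ ^ 2 - ‖a + b‖ ^ 2) - (‖A (a - b)‖ ^ 2 - ‖a - b‖ ^ 2) := by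
    rw [map_add, map_sub, norm_add_sq_real, norm_sub_sq_real, norm_add_sq_real, norm_sub_sq_real,
      ha, hb, map_smul, map_smul, real_inner_smul_left, real_inner_smul_right,
      real_inner_smul_left, real_inner_smul_right]
    ring
  have hnorms : ‖a + b‖ ^ 2 + ‖a - b‖ ^ 2 = 4 * (‖u‖ * ‖w‖) ^ 2 := by
    rw [norm_add_sq_real, norm_sub_sq_real, ha, hb, norm_smul, norm_smul, norm_norm, norm_norm]
    ring
  refine le_of_mul_le_mul_left ?_ hpos
  calc 4 * (‖u‖ * ‖w‖) * |⟪A u, A w⟫_ℝ - ⟪u, w⟫_ℝ|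
      = |(‖A (a + b)‖ ^ 2 - ‖a + b‖ ^ 2) - (‖A (a - b)‖ ^ 2 - ‖a - b‖ ^ 2)| := by
        rw [← hpolar, abs_mul, abs_of_pos hpos]
    _ ≤ δ * ‖a + b‖ ^ 2 + δ * ‖a - b‖ ^ 2 := (abs_sub _ _).trans (add_le_add (hA _) (hA _))
    _ = 4 * (‖u‖ * ‖w‖) * (δ * (‖u‖ * ‖w‖)) := by rw [← mul_add, hnorms]; ring

variable {ι : Type*}

/-- The subspace of vectors that vanish outside `S`. -/
def supportedOn (S : Finset ι) : Submodule ℝ (EuclideanSpace ℝ ι) where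
  carrier := {u | ∀ i ∉ S, u i = 0}
  zero_mem' _ _ := rfl
  add_mem' hu hw i hi := by simp [hu i hi, hw i hi]
  smul_mem' c u hu i hi := by simp [hu i hi]

lemma supportedOn_mono : Monotone (supportedOn (ι := ι)) :=
  fun _ _ hST _ hu i hi => hu i fun hiS => hi (hST hiS)

lemma single_mem_supportedOn [DecidableEq ι] {S : Finset ι} {i : ι} (hi : i ∈ S) (a : ℝ) :
    EuclideanSpace.single i a ∈ supportedOn S := by
  intro k hk
  rw [PiLp.single_apply, if_neg (ne_of_mem_of_not_mem hi hk).symm]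

lemma sum_smul_single_of_mem_supportedOn [DecidableEq ι] {T : Finset ι}
    {x : EuclideanSpace ℝ ι} (hx : x ∈ supportedOn T) :
    ∑ i ∈ T, x i • EuclideanSpace.single i (1 : ℝ) = x := by
  ext k
  by_cases hk : k ∈ T
  · simp [Pi.single_apply, hk]
  · simp [Pi.single_apply, hk, hx k hk]

variable [Fintype ι]

lemma sum_abs_le_sqrt_card_mul_norm (x : EuclideanSpace ℝ ι) (T : Finset ι) :
    ∑ i ∈ T, |x i| ≤ √(#T) * ‖x‖ := by
  rw [EuclideanSpace.norm_eq, ← Real.sqrt_mul (Nat.cast_nonneg _)]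
  refine Real.le_sqrt_of_sq_le ?_
  calc (∑ i ∈ T, |x i|) ^ 2 ≤ #T * ∑ i ∈ T, ‖x i‖ ^ 2 := sq_sum_le_card_mul_sum_sq
    _ ≤ #T * ∑ i, ‖x i‖ ^ 2 := by gcongr; exact subset_univ T

/-- The restricted isometry property of order `L` with constant `δ`, for a linear map into an
arbitrary inner product space. Sparsity is expressed by the index sets `S` of size at most `L`,
and the two bounds `(1 ± δ) ‖u‖²` on `‖A u‖²` are combined into one absolute value. -/
def RestrictedIsometry (A : EuclideanSpace ℝ ι →ₗ[ℝ] E) (L : ℕ) (δ : ℝ) : Prop :=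
  ∀ S : Finset ι, #S ≤ L → ∀ u ∈ supportedOn S, |‖A u‖ ^ 2 - ‖u‖ ^ 2| ≤ δ * ‖u‖ ^ 2

namespace RestrictedIsometry

variable {A : EuclideanSpace ℝ ι →ₗ[ℝ] E} {L : ℕ} {δ : ℝ} {S : Finset ι} {x : EuclideanSpace ℝ ι}

lemma abs_inner_map_sub_inner_le (hA : RestrictedIsometry A L δ) (hS : #S ≤ L)
    {u w : EuclideanSpace ℝ ι} (hu : u ∈ supportedOn S) (hw : w ∈ supportedOn S) :
    |⟪A u, A w⟫_ℝ - ⟪u, w⟫_ℝ| ≤ δ * (‖u‖ * ‖w‖) :=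
  abs_inner_map_sub_inner_le_of_abs_norm_sq_sub_le (A := A.domRestrict (supportedOn S))
    (fun z => hA S hS z z.2) ⟨u, hu⟩ ⟨w, hw⟩

lemma norm_map_le (hA : RestrictedIsometry A L δ) (hS : #S ≤ L) (hx : x ∈ supportedOn S) :
    ‖A x‖ ≤ √(1 + δ) * ‖x‖ := by
  rw [← Real.sqrt_sq (norm_nonneg x), ← Real.sqrt_mul' _ (sq_nonneg _)]
  refine Real.le_sqrt_of_sq_le ?_
  linarith [(abs_le.mp (hA S hS x hx)).2]

lemma le_inner_map_map_add (hA : RestrictedIsometry A L δ) (hS : #S ≤ L)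
    (hx : x ∈ supportedOn S) (v : E) :
    (1 - δ) * ‖x‖ ^ 2 - √(1 + δ) * ‖x‖ * ‖v‖ ≤ ⟪A x, A x + v⟫_ℝ := by
  have hsignal : (1 - δ) * ‖x‖ ^ 2 ≤ ⟪A x, A x⟫_ℝ := by
    rw [real_inner_self_eq_norm_sq]
    linarith [(abs_le.mp (hA S hS x hx)).1]
  have hnoise : |⟪A x, v⟫_ℝ| ≤ √(1 + δ) * ‖x‖ * ‖v‖ :=
    (abs_real_inner_le_norm _ _).trans (by gcongr; exact hA.norm_map_le hS hx)
  rw [inner_add_right]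
  linarith [(abs_le.mp hnoise).1]

end RestrictedIsometry

variable [DecidableEq ι]

lemma inner_map_le_sqrt_card_mul_norm_mul (A : EuclideanSpace ℝ ι →ₗ[ℝ] E) {T : Finset ι}
    {x : EuclideanSpace ℝ ι} (hx : x ∈ supportedOn T) {y : E} {M : ℝ} (hM₀ : 0 ≤ M)
    (hM : ∀ i ∈ T, |⟪A (EuclideanSpace.single i 1), y⟫_ℝ| ≤ M) :
    ⟪A x, y⟫_ℝ ≤ √(#T) * ‖x‖ * M := by
  calc ⟪A x, y⟫_ℝ = ∑ i ∈ T, x i * ⟪A (EuclideanSpace.single i 1), y⟫_ℝ := by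
        conv_lhs => rw [← sum_smul_single_of_mem_supportedOn hx]
        simp only [map_sum, map_smul, sum_inner, real_inner_smul_left]
    _ ≤ ∑ i ∈ T, |x i| * M := by
        refine sum_le_sum fun i hi => (le_abs_self _).trans ?_
        rw [abs_mul]
        gcongr
        exact hM i hi
    _ = (∑ i ∈ T, |x i|) * M := (sum_mul ..).symm
    _ ≤ √(#T) * ‖x‖ * M := by gcongr; exact sum_abs_le_sqrt_card_mul_norm x T

variable {A : EuclideanSpace ℝ ι →ₗ[ℝ] E} {δ : ℝ} {T : Finset ι} {x : EuclideanSpace ℝ ι}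
  {j : ι}

lemma RestrictedIsometry.abs_inner_map_single_map_add_le {L : ℕ} (hA : RestrictedIsometry A L δ)
    (hT : #T < L) (hx : x ∈ supportedOn T) (hj : j ∉ T) (v : E) :
    |⟪A (EuclideanSpace.single j 1), A x + v⟫_ℝ| ≤ δ * ‖x‖ + √(1 + δ) * ‖v‖ := by
  have hcard : #(insert j T) ≤ L := (card_insert_le j T).trans hT
  have he : EuclideanSpace.single j (1 : ℝ) ∈ supportedOn (insert j T) :=
    single_mem_supportedOn (mem_insert_self j T) 1
  have hsignal : |⟪A (EuclideanSpace.single j 1), A x⟫_ℝ| ≤ δ * ‖x‖ := by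
    simpa [EuclideanSpace.inner_single_left, hx j hj] using
      hA.abs_inner_map_sub_inner_le hcard he (supportedOn_mono (subset_insert j T) hx)
  have hcol : ‖A (EuclideanSpace.single j 1)‖ ≤ √(1 + δ) := by
    simpa using hA.norm_map_le hcard he
  rw [inner_add_right]
  exact (abs_add_le _ _).trans
    (add_le_add hsignal ((abs_real_inner_le_norm _ _).trans (by gcongr)))

theorem stmt11_general {K : ℕ} (hA : RestrictedIsometry A (K + 1) δ) (hT : #T ≤ K)
    (hx : x ∈ supportedOn T) {v : E}
    (hv : (√K + 1) * √(1 + δ) * ‖v‖ < (1 - (√K + 1) * δ) * ‖x‖)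
    (hj : ∀ i ∈ T, |⟪A (EuclideanSpace.single i 1), A x + v⟫_ℝ| ≤
      |⟪A (EuclideanSpace.single j 1), A x + v⟫_ℝ|) :
    j ∈ T := by
  by_contra hjT
  have hx₀ : 0 < ‖x‖ := by
    refine (norm_nonneg x).lt_of_ne' fun h => hv.not_ge ?_
    rw [h, mul_zero]
    positivity
  have hbounds : (1 - δ) * ‖x‖ ^ 2 - √(1 + δ) * ‖x‖ * ‖v‖ ≤
      √K * ‖x‖ * (δ * ‖x‖ + √(1 + δ) * ‖v‖) :=
    calc (1 - δ) * ‖x‖ ^ 2 - √(1 + δ) * ‖x‖ * ‖v‖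
        ≤ ⟪A x, A x + v⟫_ℝ := hA.le_inner_map_map_add (Nat.le_succ_of_le hT) hx v
      _ ≤ √(#T) * ‖x‖ * |⟪A (EuclideanSpace.single j 1), A x + v⟫_ℝ| :=
        inner_map_le_sqrt_card_mul_norm_mul A hx (abs_nonneg _) hj
      _ ≤ √K * ‖x‖ * (δ * ‖x‖ + √(1 + δ) * ‖v‖) := by
        gcongr
        exact hA.abs_inner_map_single_map_add_le (Nat.lt_succ_of_le hT) hx hjT v
  linarith [mul_lt_mul_of_pos_left hv hx₀]

end RestrictedIsometry

section OMP

variable {m n : ℕ} {Φ : Matrix (Fin m) (Fin n) ℝ}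

lemma dot_eq_inner (u v : Vec n) : dot u v = inner ℝ u v := by
  simp only [dot, PiLp.inner_apply, RCLike.inner_apply, conj_trivial, mul_comm]

lemma mulVec'_eq_toEuclideanLin_s11 (Φ : Matrix (Fin m) (Fin n) ℝ) (x : Vec n) :
    mulVec' Φ x = Φ.toEuclideanLin x := rfl

lemma col_eq_toEuclideanLin_single (Φ : Matrix (Fin m) (Fin n) ℝ) (j : Fin n) :
    col Φ j = Φ.toEuclideanLin (EuclideanSpace.single j 1) := by
  ext i
  simp [col]

lemma suppF_subset_iff_mem_supportedOn {x : Vec n} {S : Finset (Fin n)} :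
    suppF x ⊆ S ↔ x ∈ supportedOn S := by
  simp only [suppF, subset_iff, mem_filter_univ]
  exact forall_congr' fun i => not_imp_comm

lemma mem_supportedOn_suppF (x : Vec n) : x ∈ supportedOn (suppF x) :=
  suppF_subset_iff_mem_supportedOn.mp Subset.rfl

lemma RIPConst.restrictedIsometry {L : ℕ} {δ : ℝ} (h : RIPConst Φ L δ) :
    RestrictedIsometry Φ.toEuclideanLin L δ := by
  intro S hS u hu
  have hcard := (card_le_card (suppF_subset_iff_mem_supportedOn.mpr hu)).trans hS
  obtain ⟨hlower, hupper⟩ := h.1.2 u hcard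
  rw [mulVec'_eq_toEuclideanLin_s11] at hlower hupper
  exact abs_le.mpr ⟨by linarith, by linarith⟩

lemma sqrt_SNR (Φ : Matrix (Fin m) (Fin n) ℝ) (x : Vec n) (v : Vec m) :
    √(SNR Φ x v) = ‖Φ.toEuclideanLin x‖ / ‖v‖ := by
  rw [SNR, mulVec'_eq_toEuclideanLin_s11, ← div_pow, Real.sqrt_sq (by positivity)]

lemma RIPConst.mul_norm_lt_of_lt_sqrt_SNR {L : ℕ} {δ c : ℝ} {x : Vec n} {v : Vec m}
    (hRIP : RIPConst Φ L δ) (hx : #(suppF x) ≤ L) (hc : 0 < c) (hδ : δ < 1 / c) (hv : v ≠ 0)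
    (hSNR : c * (1 + δ) / (1 - c * δ) < √(SNR Φ x v)) :
    c * √(1 + δ) * ‖v‖ < (1 - c * δ) * ‖x‖ := by
  have hδ₀ : 0 ≤ δ := hRIP.1.1
  have hden : 0 < 1 - c * δ := by linarith [(lt_div_iff₀' hc).mp hδ]
  have hnorm : ‖Φ.toEuclideanLin x‖ ≤ √(1 + δ) * ‖x‖ :=
    hRIP.restrictedIsometry.norm_map_le hx (mem_supportedOn_suppF x)
  rw [sqrt_SNR, div_lt_div_iff₀ hden (norm_pos_iff.mpr hv)] at hSNR
  refine lt_of_mul_lt_mul_left ?_ (Real.sqrt_nonneg (1 + δ))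
  calc √(1 + δ) * (c * √(1 + δ) * ‖v‖) = c * (1 + δ) * ‖v‖ := by
        linear_combination c * ‖v‖ * Real.sq_sqrt (by positivity : 0 ≤ 1 + δ)
    _ < ‖Φ.toEuclideanLin x‖ * (1 - c * δ) := hSNR
    _ ≤ √(1 + δ) * ‖x‖ * (1 - c * δ) := by gcongr
    _ = √(1 + δ) * ((1 - c * δ) * ‖x‖) := by ring

lemma OMPRun.abs_inner_le_abs_inner_idx_one {y : Vec m} {N : ℕ} (run : OMPRun Φ y N) (hN : 0 < N)
    (i : Fin n) :
    |inner ℝ (Φ.toEuclideanLin (EuclideanSpace.single i 1)) y| ≤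
      |inner ℝ (Φ.toEuclideanLin (EuclideanSpace.single (run.idx 1) 1)) y| := by
  simpa only [run.res_zero, dot_eq_inner, col_eq_toEuclideanLin_single] using
    run.idx_max 0 hN i (by simp [run.sets_zero])

end OMP

/-- SNR condition under which OMP selects a correct index at the
first iteration. -/
theorem stmt11 {m n K : ℕ} (Φ : Matrix (Fin m) (Fin n) ℝ) (δ : ℝ)
    (x : Vec n) (v y : Vec m) (T : Finset (Fin n))
    (hsupp : suppF x = T) (hcard : T.card = K) (hK1 : 1 ≤ K)
    (hRIP : RIPConst Φ (K + 1) δ) (hδ : δ < 1 / (Real.sqrt K + 1))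
    (hv : v ≠ 0) (hy : y = mulVec' Φ x + v)
    (hSNR : Real.sqrt (SNR Φ x v) >
      (Real.sqrt K + 1) * (1 + δ) / (1 - (Real.sqrt K + 1) * δ))
    (run : OMPRun Φ y 1) :
    run.idx 1 ∈ T := by
  subst hsupp hy
  exact stmt11_general hRIP.restrictedIsometry hcard.le (mem_supportedOn_suppF x)
    (hRIP.mul_norm_lt_of_lt_sqrt_SNR (hcard.trans_le K.le_succ) (by positivity) hδ hv hSNR)
    fun i _ => run.abs_inner_le_abs_inner_idx_one one_pos i

end
end
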